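/- For a = 5, the quartic P₅(x) = −4·6⁴x⁴ + 2·4·6⁶x³ − 6²(2·5⁵+5·5⁴+6·5³+6·5²+8·5+1)x² + 5(3·5²+4·5−1)·6³x − (6⁵+5²) has exactly four distinct roots in (0, ∞). -/

import Mathlib

/-!
A quartic has at most four roots, and `P₅` has one in each gap between consecutive nodes
`0 < 1/5 < 2/5 < 1 < 100`, where it takes the signs `-, +, -, +, -`.
-/

open Polynomial Set

section IntermediateValue

variable {α R : Type*}
  [ConditionallyCompleteLinearOrder α] [TopologicalSpace α] [OrderTopology α] [DenselyOrdered α]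
  [Ring R] [LinearOrder R] [IsStrictOrderedRing R] [TopologicalSpace R] [OrderClosedTopology R]
  {f : α → R}

theorem exists_mem_Ioo_eq_zero_of_mul_neg
    {a b : α} (hab : a ≤ b) (hf : ContinuousOn f (Icc a b)) (h : f a * f b < 0) :
    ∃ x ∈ Ioo a b, f x = 0 := by
  rcases mul_neg_iff.mp h with ⟨ha, hb⟩ | ⟨ha, hb⟩
  · exact intermediate_value_Ioo' hab hf ⟨hb, ha⟩
  · exact intermediate_value_Ioo hab hf ⟨ha, hb⟩

theorem le_encard_setOf_eq_zero_of_forall_mul_neg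
    {n : ℕ} {t : Fin (n + 1) → α} (ht : Monotone t)
    (hf : ContinuousOn f (Icc (t 0) (t (Fin.last n))))
    (hsign : ∀ i : Fin n, f (t i.castSucc) * f (t i.succ) < 0) :
    n ≤ {x ∈ Ioo (t 0) (t (Fin.last n)) | f x = 0}.encard := by
  have hzero (i : Fin n) : ∃ x ∈ Ioo (t i.castSucc) (t i.succ), f x = 0 :=
    exists_mem_Ioo_eq_zero_of_mul_neg (ht i.castSucc_le_succ)
      (hf.mono (Icc_subset_Icc (ht (Fin.zero_le _)) (ht (Fin.le_last _)))) (hsign i)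
  choose z hz hfz using hzero
  have hz_mono : StrictMono z := fun i j hij ↦
    calc z i < t i.succ := (hz i).2
      _ ≤ t j.castSucc := ht (Fin.succ_le_castSucc_iff.mpr hij)
      _ < z j := (hz j).1
  have hz_mem : range z ⊆ {x ∈ Ioo (t 0) (t (Fin.last n)) | f x = 0} :=
    range_subset_iff.mpr fun i ↦
      ⟨Ioo_subset_Ioo (ht (Fin.zero_le _)) (ht (Fin.le_last _)) (hz i), hfz i⟩
  calc (n : ℕ∞) = (range z).encard := by simp [← image_univ, hz_mono.injective.encard_image]
    _ ≤ _ := encard_le_encard hz_mem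

end IntermediateValue

theorem encard_setOf_isRoot_eq_degree_of_forall_mul_neg {p : ℝ[X]} {n : ℕ} (hp : p.degree = n)
    {t : Fin (n + 1) → ℝ} (ht : Monotone t)
    (hsign : ∀ i : Fin n, p.eval (t i.castSucc) * p.eval (t i.succ) < 0)
    {s : Set ℝ} (hs : Ioo (t 0) (t (Fin.last n)) ⊆ s) :
    {x ∈ s | p.IsRoot x}.encard = n := by
  have hp0 : p ≠ 0 := by
    rintro rfl
    simp at hp
  apply le_antisymm
  · calc {x ∈ s | p.IsRoot x}.encard ≤ (p.rootSet ℝ).encard :=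
          encard_le_encard fun _ hx ↦ (mem_rootSet_of_ne hp0).mpr (by simpa using hx.2)
      _ = (p.rootSet ℝ).ncard := (p.rootSet_finite ℝ).cast_ncard_eq.symm
      _ ≤ p.natDegree := mod_cast p.ncard_rootSet_le ℝ
      _ = n := by rw [natDegree_eq_of_degree_eq_some hp]
  · calc (n : ℕ∞) ≤ {x ∈ Ioo (t 0) (t (Fin.last n)) | p.eval x = 0}.encard :=
          le_encard_setOf_eq_zero_of_forall_mul_neg ht p.continuousOn hsign
      _ ≤ {x ∈ s | p.IsRoot x}.encard := encard_le_encard fun _ hx ↦ ⟨hs hx.1, hx.2⟩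

/-- The quartic `P_a` of the (2,3)-Ising-Potts model on the binary Cayley tree, produced by the
elimination step in the study of its translation-invariant Gibbs measures. It is a polynomial in
the unknown `x`; the interaction parameter `a` is an element of the coefficient ring. -/
noncomputable def isingPottsQuartic {R : Type*} [CommRing R] (a : R) : R[X] :=
  C (-4 * (a + 1) ^ 4) * X ^ 4 + C (2 * (a - 1) * (a + 1) ^ 6) * X ^ 3 -
    C ((a + 1) ^ 2 * (2 * a ^ 5 + 5 * a ^ 4 + 6 * a ^ 3 + 6 * a ^ 2 + 8 * a + 1)) * X ^ 2 +
    C (a * (3 * a ^ 2 + 4 * a - 1) * (a + 1) ^ 3) * X - C ((a + 1) ^ 5 + a ^ 2)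

theorem eval_isingPottsQuartic {R : Type*} [CommRing R] (a x : R) :
    (isingPottsQuartic a).eval x =
      -4 * (a + 1) ^ 4 * x ^ 4 + 2 * (a - 1) * (a + 1) ^ 6 * x ^ 3 -
        (a + 1) ^ 2 * (2 * a ^ 5 + 5 * a ^ 4 + 6 * a ^ 3 + 6 * a ^ 2 + 8 * a + 1) * x ^ 2 +
        a * (3 * a ^ 2 + 4 * a - 1) * (a + 1) ^ 3 * x - ((a + 1) ^ 5 + a ^ 2) := by
  simp only [isingPottsQuartic, eval_add, eval_sub, eval_mul, eval_C, eval_pow, eval_X]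

theorem degree_isingPottsQuartic {R : Type*} [CommRing R] [IsDomain R] [CharZero R] {a : R}
    (ha : a ≠ -1) : (isingPottsQuartic a).degree = 4 := by
  have ha' : a + 1 ≠ 0 := by rwa [Ne, add_eq_zero_iff_eq_neg]
  unfold isingPottsQuartic
  compute_degree!

theorem eval_isingPottsQuartic_five_mul_neg (i : Fin 4) :
    (isingPottsQuartic (5 : ℝ)).eval (![0, 1 / 5, 2 / 5, 1, 100] i.castSucc) *
      (isingPottsQuartic (5 : ℝ)).eval (![0, 1 / 5, 2 / 5, 1, 100] i.succ) < 0 := by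
  have h₀ : (isingPottsQuartic (5 : ℝ)).eval 0 < 0 := by norm_num [eval_isingPottsQuartic]
  have h₁ : 0 < (isingPottsQuartic (5 : ℝ)).eval (1 / 5) := by norm_num [eval_isingPottsQuartic]
  have h₂ : (isingPottsQuartic (5 : ℝ)).eval (2 / 5) < 0 := by norm_num [eval_isingPottsQuartic]
  have h₃ : 0 < (isingPottsQuartic (5 : ℝ)).eval 1 := by norm_num [eval_isingPottsQuartic]
  have h₄ : (isingPottsQuartic (5 : ℝ)).eval 100 < 0 := by norm_num [eval_isingPottsQuartic]
  fin_cases i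
  exacts [mul_neg_of_neg_of_pos h₀ h₁, mul_neg_of_pos_of_neg h₁ h₂,
    mul_neg_of_neg_of_pos h₂ h₃, mul_neg_of_pos_of_neg h₃ h₄]

/-- for `a = 5`, the quartic `P₅` of the (2,3)-Ising-Potts model
has exactly four distinct roots in `(0, ∞)`. -/
theorem stmt18 :
    {x : ℝ | 0 < x ∧
      -4 * (6 : ℝ) ^ 4 * x ^ 4 + 2 * 4 * (6 : ℝ) ^ 6 * x ^ 3 -
        (6 : ℝ) ^ 2 * (2 * 5 ^ 5 + 5 * 5 ^ 4 + 6 * 5 ^ 3 + 6 * 5 ^ 2 + 8 * 5 + 1) * x ^ 2 +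
        5 * (3 * 5 ^ 2 + 4 * 5 - 1) * (6 : ℝ) ^ 3 * x - ((6 : ℝ) ^ 5 + 5 ^ 2) = 0}.ncard
      = 4 := by
  have hnodes : Monotone ![(0 : ℝ), 1 / 5, 2 / 5, 1, 100] := by
    norm_num [Fin.monotone_iff_le_succ, Fin.forall_fin_succ]
  have hroots : {x ∈ Ioi 0 | (isingPottsQuartic (5 : ℝ)).IsRoot x}.encard = (4 : ℕ) :=
    encard_setOf_isRoot_eq_degree_of_forall_mul_neg (degree_isingPottsQuartic (by norm_num))
      hnodes eval_isingPottsQuartic_five_mul_neg Ioo_subset_Ioi_self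
  rw [Set.ncard, ENat.toNat_eq_iff four_ne_zero, ← hroots]
  congr! 3 with x
  rw [IsRoot.def, eval_isingPottsQuartic]
  norm_num
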